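/- arXiv:2510.00912 — 6 statements merged into one kernel-verified Lean document; each statement's English description precedes it below -/
import Mathlib

section
/- Let V be a commutative quantale, (X,d) a V-category, and (φ, ψ) an adjoint pair of V-distributors (φ : E ⇸ X) ⊣ (ψ : X ⇸ E) on X. Then the pair is representable (i.e., there exists x ∈ X with φ b = d x b and ψ a = d a x for all a, b ∈ X) if and only if there exists an element x ∈ X with k ≤ φ x and k ≤ ψ x. -/
/-!
A factor above the unit can be dropped from the left-hand side of an inequality: if `1 ≤ v` and
`u * v ≤ w`, then `u ≤ w`. So if `1 ≤ φ x` and `1 ≤ ψ x`, evaluating the actions and the counit of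
the adjunction at `x` bounds `φ` by `d x ·` and `ψ` by `d · x` in both directions. Conversely,
evaluating a representation by `x` at `x` itself gives `φ x = d x x = ψ x`.
-/

theorem isQuantale_of_mul_sSup {V : Type*} [CommSemigroup V] [CompleteLattice V]
    (h : ∀ (u : V) (S : Set V), u * sSup S = ⨆ v ∈ S, u * v) : IsQuantale V where
  mul_sSup_distrib := h
  sSup_mul_distrib S u := by simpa only [mul_comm] using h u S

/-- The commutative monoid given by an unbundled operation `mul` with right unit `k`; it makes the
results on ordered monoids and on `IsQuantale` available for `mul`. -/
abbrev commMonoidOfRightUnit {V : Type*} {mul : V → V → V} {k : V}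
    (comm : ∀ u v, mul u v = mul v u) (assoc : ∀ u v w, mul (mul u v) w = mul u (mul v w))
    (unit : ∀ u, mul u k = u) : CommMonoid V where
  mul := mul
  one := k
  mul_assoc := assoc
  mul_comm := comm
  mul_one := unit
  one_mul u := (comm k u).trans (unit u)

/-- The pair of distributors `φ : E ⇸ X`, `ψ : X ⇸ E` is represented by the object `x` of `(X, d)`.
Here `E` has a single object, so that `φ` and `ψ` are functions on `X`. -/
def Represents {V X : Type*} (d : X → X → V) (φ ψ : X → V) (x : X) : Prop :=
  (∀ b, φ b = d x b) ∧ (∀ a, ψ a = d a x)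

section OrderedMonoid

variable {V X : Type*} [MulOneClass V] [PartialOrder V] {d : X → X → V} {φ ψ : X → V} {x : X}

theorem Represents.one_le (h : Represents d φ ψ x) (hrefl : 1 ≤ d x x) : 1 ≤ φ x ∧ 1 ≤ ψ x :=
  ⟨hrefl.trans_eq (h.1 x).symm, hrefl.trans_eq (h.2 x).symm⟩

theorem represents_of_one_le [MulLeftMono V] [MulRightMono V]
    (hφ : ∀ b, d x b * φ x ≤ φ b) (hψ : ∀ a, ψ x * d a x ≤ ψ a)
    (hcounit : ∀ a b, φ b * ψ a ≤ d a b) (hφx : 1 ≤ φ x) (hψx : 1 ≤ ψ x) :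
    Represents d φ ψ x where
  left b := le_antisymm
    (le_of_mul_le_of_one_le_left (hcounit x b) hψx)
    (le_of_mul_le_of_one_le_left (hφ b) hφx)
  right a := le_antisymm
    (le_of_mul_le_of_one_le_right (hcounit a x) hφx)
    (le_of_mul_le_of_one_le_right (hψ a) hψx)

theorem stmt0_general [MulLeftMono V] [MulRightMono V] (hrefl : ∀ x, 1 ≤ d x x)
    (hφ : ∀ a b, d a b * φ a ≤ φ b) (hψ : ∀ a b, ψ b * d a b ≤ ψ a)
    (hcounit : ∀ a b, φ b * ψ a ≤ d a b) :
    (∃ x, (∀ b, φ b = d x b) ∧ (∀ a, ψ a = d a x)) ↔ ∃ x, 1 ≤ φ x ∧ 1 ≤ ψ x :=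
  exists_congr fun x ↦
    ⟨fun h ↦ Represents.one_le h (hrefl x),
      fun h ↦ represents_of_one_le (hφ x) (hψ · x) hcounit h.1 h.2⟩

end OrderedMonoid

/-- For a commutative quantale `V` and a `V`-category `(X, d)`,
an adjoint pair of `V`-distributors `(φ : E ⇸ X) ⊣ (ψ : X ⇸ E)` is representable
iff there is `x ∈ X` with `k ≤ φ x` and `k ≤ ψ x`. -/
theorem stmt0 {V : Type*} [CompleteLattice V] (mul : V → V → V) (k : V)
    (hmul_comm : ∀ u v : V, mul u v = mul v u)
    (hmul_assoc : ∀ u v w : V, mul (mul u v) w = mul u (mul v w))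
    (hmul_unit : ∀ u : V, mul u k = u)
    (hmul_sSup : ∀ (u : V) (S : Set V), mul u (sSup S) = ⨆ v ∈ S, mul u v)
    {X : Type*} (d : X → X → V)
    (hrefl : ∀ x : X, k ≤ d x x)
    (htrans : ∀ x y z : X, mul (d y z) (d x y) ≤ d x z)
    (φ ψ : X → V)
    (hφ : ∀ a b : X, mul (d a b) (φ a) ≤ φ b)
    (hψ : ∀ a b : X, mul (ψ b) (d a b) ≤ ψ a)
    (hadj_unit : k ≤ ⨆ c : X, mul (ψ c) (φ c))
    (hadj_counit : ∀ a b : X, mul (φ b) (ψ a) ≤ d a b) :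
    (∃ x : X, (∀ b : X, φ b = d x b) ∧ (∀ a : X, ψ a = d a x)) ↔
      (∃ x : X, k ≤ φ x ∧ k ≤ ψ x) := by
  let _ := commMonoidOfRightUnit hmul_comm hmul_assoc hmul_unit
  have := isQuantale_of_mul_sSup hmul_sSup
  exact stmt0_general hrefl hφ hψ hadj_counit
end

section
/- Let X be a complete extended metric space (an emetric space X with the Cauchy-completeness property). Let φ, ψ : X → ℝ≥0∞ satisfy: (i) φ y ≤ edist x y + φ x for all x, y; (ii) ψ x ≤ ψ y + edist x y for all x, y; (iii) edist x y ≤ φ y + ψ x for all x, y; (iv) ⨅_{c ∈ X} (ψ c + φ c) = 0. Then there exists x ∈ X with φ y = edist x y for all y and ψ y = edist y x for all y (in particular φ x = 0 and ψ x = 0). -/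
open scoped ENNReal

open Filter Topology

/-!
The filter of neighbourhoods of zero pulled back along `ψ + φ` is proper by the unit condition and
Cauchy by the counit condition `edist x y ≤ φ y + ψ x`, so it converges to some point `x`. As `φ`
and `ψ` tend to zero along this filter and are `1`-Lipschitz, they vanish at `x`. An adjoint pair
vanishing at `x` is represented by `x`.
-/

theorem neBot_comap_nhds_iInf {ι α : Type*} [Nonempty ι] [CompleteLinearOrder α]
    [TopologicalSpace α] [OrderTopology α] (f : ι → α) : (comap f (𝓝 (⨅ i, f i))).NeBot :=
  comap_neBot_iff_frequently.mpr <| mem_closure_iff_frequently.mp <|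
    isGLB_iInf.mem_closure (Set.range_nonempty f)

section PseudoEMetricSpace

variable {X : Type*} [PseudoEMetricSpace X] {f g : X → ℝ≥0∞} {l : Filter X} [l.NeBot]

theorem cauchy_of_edist_le_add (hf : Tendsto f l (𝓝 0)) (hg : Tendsto g l (𝓝 0))
    (hfg : ∀ x y, edist x y ≤ f y + g x) : Cauchy l := by
  have hsum : Tendsto (fun p : X × X => f p.2 + g p.1) (l ×ˢ l) (𝓝 0) := by
    simpa only [add_zero, Function.comp_apply] using (hf.comp tendsto_snd).add (hg.comp tendsto_fst)
  have hdist : Tendsto (fun p : X × X => edist p.1 p.2) (l ×ˢ l) (𝓝 0) :=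
    tendsto_nhds_bot_mono' hsum fun p => hfg p.1 p.2
  exact ⟨‹l.NeBot›, uniformity_basis_edist.ge_iff.mpr fun ε hε =>
    hdist.eventually_lt_const hε⟩

theorem eq_zero_of_tendsto_of_le_edist_add {x : X} (hl : l ≤ 𝓝 x) (hf : Tendsto f l (𝓝 0))
    (hfx : ∀ y, f x ≤ edist y x + f y) : f x = 0 := by
  have hdist : Tendsto (fun y => edist y x) l (𝓝 0) := tendsto_iff_edist_tendsto_0.mp hl
  have hsum : Tendsto (fun y => edist y x + f y) l (𝓝 0) := by
    simpa only [add_zero] using hdist.add hf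
  exact le_antisymm (ge_of_tendsto' hsum hfx) zero_le

end PseudoEMetricSpace

theorem stmt3_general {X : Type*} [PseudoEMetricSpace X] [CompleteSpace X]
    (φ ψ : X → ℝ≥0∞)
    (hφ : ∀ x y : X, φ y ≤ edist x y + φ x)
    (hψ : ∀ x y : X, ψ x ≤ ψ y + edist x y)
    (hcounit : ∀ x y : X, edist x y ≤ φ y + ψ x)
    (hunit : (⨅ c : X, (ψ c + φ c)) = 0) :
    ∃ x : X, (∀ y : X, φ y = edist x y) ∧ (∀ y : X, ψ y = edist y x) := by
  have : Nonempty X := not_isEmpty_iff.mp fun _ => by simp [iInf_of_empty] at hunit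
  let l : Filter X := comap (fun c => ψ c + φ c) (𝓝 0)
  have : l.NeBot := by
    simpa only [hunit] using neBot_comap_nhds_iInf fun c => ψ c + φ c
  have hψl : Tendsto ψ l (𝓝 0) := tendsto_nhds_bot_mono' tendsto_comap fun _ => le_self_add
  have hφl : Tendsto φ l (𝓝 0) := tendsto_nhds_bot_mono' tendsto_comap fun _ => le_add_self
  obtain ⟨x, hx⟩ := CompleteSpace.complete (cauchy_of_edist_le_add hφl hψl hcounit)
  have hφx : φ x = 0 := eq_zero_of_tendsto_of_le_edist_add hx hφl fun y => hφ y x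
  have hψx : ψ x = 0 := eq_zero_of_tendsto_of_le_edist_add hx hψl fun y => by
    simpa only [add_comm, edist_comm] using hψ x y
  refine ⟨x, fun y => le_antisymm ?_ ?_, fun y => le_antisymm ?_ ?_⟩
  · simpa only [hφx, add_zero] using hφ x y
  · simpa only [hψx, add_zero] using hcounit x y
  · simpa only [hψx, zero_add] using hψ y x
  · simpa only [hφx, zero_add] using hcounit y x

/-- In a complete extended metric space, every adjoint pair of
`[0,∞]`-distributors `(φ, ψ)` is representable. -/
theorem stmt3 {X : Type*} [EMetricSpace X] [CompleteSpace X]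
    (φ ψ : X → ℝ≥0∞)
    (hφ : ∀ x y : X, φ y ≤ edist x y + φ x)
    (hψ : ∀ x y : X, ψ x ≤ ψ y + edist x y)
    (hcounit : ∀ x y : X, edist x y ≤ φ y + ψ x)
    (hunit : (⨅ c : X, (ψ c + φ c)) = 0) :
    ∃ x : X, (∀ y : X, φ y = edist x y) ∧ (∀ y : X, ψ y = edist y x) :=
  stmt3_general φ ψ hφ hψ hcounit hunit
end

section
/- Let X be an extended metric space. Suppose that for all functions φ, ψ : X → ℝ≥0∞ satisfying (i) φ y ≤ edist x y + φ x for all x, y; (ii) ψ x ≤ ψ y + edist x y for all x, y; (iii) edist x y ≤ φ y + ψ x for all x, y; and (iv) ⨅_{c ∈ X} (ψ c + φ c) = 0, there exists x ∈ X with φ y = edist x y for all y. Then X is a complete space: every Cauchy sequence in X converges. -/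
open scoped ENNReal

/-!
Along an ultrafilter `l` on `X`, the distances `edist z y` converge, because `ℝ≥0∞` is compact;
their limit `φ y` is the distance from `y` to the would-be limit of `l`. Passing to the limit in
the triangle inequality makes `(φ, φ)` an adjoint pair as soon as `φ` has infimum `0`, which holds
for Cauchy `l` because then `φ` tends to `0` along `l`. A point `x` representing `φ` therefore
satisfies `edist x z = φ z → 0` along `l`, that is, `l` converges to `x`.
-/

open Filter Topology

theorem iInf_add_self_eq_zero {ι : Sort*} {f : ι → ℝ≥0∞} (hf : ⨅ i, f i = 0) :
    ⨅ i, (f i + f i) = 0 := by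
  simp only [← two_mul, ← ENNReal.mul_iInf_of_ne two_ne_zero ENNReal.ofNat_ne_top, hf, mul_zero]

section

variable {X : Type*} [PseudoEMetricSpace X]

/-- Katětov functions: those which satisfy the triangle inequalities required of the distance to a
point adjoined to `X`. A Katětov function `φ` with infimum `0` is the same thing as an adjoint pair
of `[0,∞]`-distributors of the form `(φ, φ)`. -/
structure IsKatetov (φ : X → ℝ≥0∞) : Prop where
  le_edist_add (x y : X) : φ y ≤ edist x y + φ x
  edist_le_add (x y : X) : edist x y ≤ φ y + φ x

theorem IsKatetov.le_add_edist {φ : X → ℝ≥0∞} (hφ : IsKatetov φ) (x y : X) :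
    φ x ≤ φ y + edist x y := by
  simpa only [edist_comm, add_comm] using hφ.le_edist_add y x

/-- The limit of the distances to `y` along the ultrafilter `l`. It plays the role of the distance
from `y` to a limit of `l`, which need not exist. -/
noncomputable def limEDist (l : Ultrafilter X) (y : X) : ℝ≥0∞ :=
  (l.map (edist · y)).lim

theorem tendsto_edist_limEDist (l : Ultrafilter X) (y : X) :
    Tendsto (edist · y) l (𝓝 (limEDist l y)) :=
  (l.map (edist · y)).le_nhds_lim

theorem isKatetov_limEDist (l : Ultrafilter X) : IsKatetov (limEDist l) where
  le_edist_add x y :=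
    le_of_tendsto_of_tendsto' (tendsto_edist_limEDist l y)
      ((tendsto_edist_limEDist l x).const_add (edist x y)) fun z =>
        (edist_triangle z x y).trans_eq (add_comm _ _)
  edist_le_add x y :=
    ge_of_tendsto' ((tendsto_edist_limEDist l y).add (tendsto_edist_limEDist l x)) fun z =>
      (edist_triangle_left x y z).trans_eq (add_comm _ _)

theorem tendsto_limEDist_zero {l : Ultrafilter X} (hl : Cauchy (l : Filter X)) :
    Tendsto (limEDist l) l (𝓝 0) := by
  refine ENNReal.tendsto_nhds_zero.2 fun ε hε => ?_
  obtain ⟨s, hs, hsε⟩ := (EMetric.cauchy_iff.1 hl).2 ε hε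
  filter_upwards [hs] with y hy
  refine le_of_tendsto (tendsto_edist_limEDist l y) ?_
  filter_upwards [hs] with z hz using (hsε z hz y hy).le

theorem iInf_limEDist_eq_zero {l : Ultrafilter X} (hl : Cauchy (l : Filter X)) :
    ⨅ y, limEDist l y = 0 :=
  le_antisymm (ge_of_tendsto' (tendsto_limEDist_zero hl) (iInf_le _)) zero_le

theorem le_nhds_of_limEDist_eq_edist {l : Ultrafilter X} (hl : Cauchy (l : Filter X)) {x : X}
    (hx : ∀ y, limEDist l y = edist x y) : (l : Filter X) ≤ 𝓝 x := by
  refine tendsto_id'.1 (tendsto_iff_edist_tendsto_0.2 ?_)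
  simpa only [id, edist_comm _ x, ← hx] using tendsto_limEDist_zero hl

theorem stmt4_general
    (h : ∀ φ : X → ℝ≥0∞, IsKatetov φ → ⨅ c, φ c = 0 → ∃ x, ∀ y, φ y = edist x y) :
    CompleteSpace X := by
  refine completeSpace_iff_ultrafilter.2 fun l hl => ?_
  obtain ⟨x, hx⟩ := h (limEDist l) (isKatetov_limEDist l) (iInf_limEDist_eq_zero hl)
  exact ⟨x, le_nhds_of_limEDist_eq_edist hl hx⟩

end

/-- If every adjoint pair of `[0,∞]`-distributors `(φ, ψ)` on an
extended metric space `X` is representable, then `X` is a complete space. -/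
theorem stmt4 {X : Type*} [EMetricSpace X]
    (h : ∀ φ ψ : X → ℝ≥0∞,
      (∀ x y : X, φ y ≤ edist x y + φ x) →
      (∀ x y : X, ψ x ≤ ψ y + edist x y) →
      (∀ x y : X, edist x y ≤ φ y + ψ x) →
      (⨅ c : X, (ψ c + φ c)) = 0 →
      ∃ x : X, ∀ y : X, φ y = edist x y) :
    CompleteSpace X :=
  stmt4_general fun φ hφ h0 => h φ φ hφ.le_edist_add hφ.le_add_edist hφ.edist_le_add
    (iInf_add_self_eq_zero h0)
end

section
/- Let V be a commutative quantale and let (A_n, ν_n)_{n ∈ ℕ} be a sequence of V-normed sets with connecting maps s_{m,n} : A_m → A_n for m ≤ n satisfying s_{n,n} = id and s_{n,l} ∘ s_{m,n} = s_{m,l} for m ≤ n ≤ l, which is Cauchy: k ≤ ⨆_{N ∈ ℕ} ⨅_{N ≤ m ≤ n} |s_{m,n}|. Let γ_n : A_n → A be maps with γ_m = γ_n ∘ s_{m,n} for m ≤ n, and equip A with the norm |a| = ⨅_{N ∈ ℕ} ⨆_{n ≥ N} ⨆_{a' ∈ γ_n⁻¹(a)} ν_n a'. Then: (C2a) k ≤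 ⨆_{N ∈ ℕ} ⨅_{n ≥ N} |γ_n|; and (C2b) for every V-normed set (B, ν_B) and every map φ : A → B, ⨆_{K ∈ ℕ} ⨅_{n ≥ K} |φ ∘ γ_n| ≤ |φ|. (Hence the V-normed category of V-normed sets and arbitrary maps is Cauchy cocomplete, for every commutative quantale V.) -/
/-!
Both conditions hold termwise in the outer supremum, by residuation.

(C2a): let `c` be the Cauchy term at `N`, `n ≥ N` and `a : A n`. For each `M` choose `m` above both
`n` and `M`; then `s a : A m` lies in the fibre of `γ` over `γ n a` beyond `M`, and
`c ⊗ |a| ≤ |s a|`.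

(C2b): let `c` be the term at `K`. By commutativity `c ≤ [|x|, |φ x|]` is the same as
`|x| ≤ [c, |φ x|]`, so the infimum defining `|x|` may be bounded by its `K`-th term, a supremum
over exactly those elements of the fibres which `c` controls.
-/

section ResiduatedNorms

variable {V : Type*}

theorem le_hom_comm [LE V] {mul hom : V → V → V} (hmul_comm : ∀ u v, mul u v = mul v u)
    (hhom : ∀ u v w, mul w u ≤ v ↔ w ≤ hom u v) (u v w : V) : w ≤ hom u v ↔ u ≤ hom w v := by
  rw [← hhom, hmul_comm, hhom]

/-- The norm `|f| = ⨅ a, [|a|, |f a|]` of a map between `V`-normed sets, where `hom` is the internal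
hom `[-, -]` of `V`. A `V`-normed set is encoded by its norm function alone. -/
def mapNorm [InfSet V] (hom : V → V → V) {X Y : Type*} (νX : X → V) (νY : Y → V) (f : X → Y) : V :=
  ⨅ a, hom (νX a) (νY (f a))

variable [CompleteLattice V] {mul hom : V → V → V} {ι : Type*} [LE ι] {A : ι → Type*}
  {ν : ∀ n, A n → V} {L : Type*} {γ : ∀ n, A n → L} {c : V}

/-- The candidate norm of a normed colimit, placed on the vertex `L` of a cocone `γ` over
`V`-normed sets `(A n, ν n)`: the limit superior of the norms of the elements of the fibres. -/
def coconeNorm (ν : ∀ n, A n → V) (γ : ∀ n, A n → L) (x : L) : V :=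
  ⨅ M : ι, ⨆ m : ι, ⨆ _ : M ≤ m, ⨆ a : {a : A m // γ m a = x}, ν m a.1

theorem le_coconeNorm {x : L} (h : ∀ M, ∃ m, M ≤ m ∧ ∃ a, γ m a = x ∧ c ≤ ν m a) :
    c ≤ coconeNorm ν γ x := by
  refine le_iInf fun M => ?_
  obtain ⟨m, hm, a, ha, hc⟩ := h M
  exact le_iSup₂_of_le m hm (le_iSup_of_le ⟨a, ha⟩ hc)

theorem coconeNorm_le {x : L} (K : ι) (h : ∀ m, K ≤ m → ∀ a, γ m a = x → ν m a ≤ c) :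
    coconeNorm ν γ x ≤ c :=
  iInf_le_of_le K <| iSup₂_le fun m hm => iSup_le fun a => h m hm a.1 a.2

theorem le_mapNorm_coconeNorm [IsDirectedOrder ι] (hhom : ∀ u v w, mul w u ≤ v ↔ w ≤ hom u v)
    {n : ι} {s : ∀ {m}, n ≤ m → A n → A m} (hγ : ∀ {m} (h : n ≤ m) a, γ n a = γ m (s h a))
    (hc : ∀ {m} (h : n ≤ m), c ≤ mapNorm hom (ν n) (ν m) (s h)) :
    c ≤ mapNorm hom (ν n) (coconeNorm ν γ) (γ n) := by
  refine le_iInf fun a => (hhom _ _ _).1 (le_coconeNorm fun M => ?_)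
  obtain ⟨m, hnm, hMm⟩ := exists_ge_ge n M
  have hsa : mul c (ν n a) ≤ ν m (s hnm a) := (hhom _ _ _).2 ((hc hnm).trans (iInf_le _ a))
  exact ⟨m, hMm, s hnm a, (hγ hnm a).symm, hsa⟩

theorem le_mapNorm_of_le_mapNorm_comp (hswap : ∀ u v w, w ≤ hom u v ↔ u ≤ hom w v)
    {B : Type*} {νB : B → V} {φ : L → B} (K : ι)
    (hc : ∀ n, K ≤ n → c ≤ mapNorm hom (ν n) νB (φ ∘ γ n)) :
    c ≤ mapNorm hom (coconeNorm ν γ) νB φ := by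
  refine le_iInf fun x => (hswap _ _ _).2 (coconeNorm_le K ?_)
  rintro n hn a rfl
  exact (hswap _ _ _).1 ((hc n hn).trans (iInf_le _ a))

theorem stmt6_general [IsDirectedOrder ι] (hmul_comm : ∀ u v, mul u v = mul v u)
    (hhom : ∀ u v w, mul w u ≤ v ↔ w ≤ hom u v) (ν : ∀ n, A n → V)
    (s : ∀ {m n}, m ≤ n → A m → A n) (γ : ∀ n, A n → L)
    (hγ : ∀ {m n} (h : m ≤ n) a, γ m a = γ n (s h a)) :
    ((⨆ N : ι, ⨅ m : ι, ⨅ n : ι, ⨅ _ : N ≤ m, ⨅ h : m ≤ n, mapNorm hom (ν m) (ν n) (s h)) ≤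
        ⨆ N : ι, ⨅ n : ι, ⨅ _ : N ≤ n, mapNorm hom (ν n) (coconeNorm ν γ) (γ n)) ∧
      ∀ (B : Type*) (νB : B → V) (φ : L → B),
        (⨆ K : ι, ⨅ n : ι, ⨅ _ : K ≤ n, mapNorm hom (ν n) νB (φ ∘ γ n)) ≤
          mapNorm hom (coconeNorm ν γ) νB φ := by
  refine ⟨iSup_mono fun N => le_iInf₂ fun n hn => ?_, fun B νB φ => iSup_le fun K => ?_⟩
  · exact le_mapNorm_coconeNorm hhom hγ fun {m} h => (iInf₂_le n m).trans (iInf₂_le hn h)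
  · exact le_mapNorm_of_le_mapNorm_comp (le_hom_comm hmul_comm hhom) K fun n hn => iInf₂_le n hn

end ResiduatedNorms

/-- For any commutative quantale `V`, given a Cauchy sequence of
`V`-normed sets `(A n, ν n)` with connecting maps `s`, a cocone `γ` over it and
the canonical (final-structure) norm on the vertex, conditions (C2a) and (C2b)
of a normed colimit hold; hence `V`-normed sets form a Cauchy cocomplete
`V`-normed category. -/
theorem stmt6 {V : Type*} [CompleteLattice V] (mul : V → V → V) (k : V)
    (hom : V → V → V)
    (hmul_comm : ∀ u v : V, mul u v = mul v u)
    (hmul_assoc : ∀ u v w : V, mul (mul u v) w = mul u (mul v w))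
    (hmul_unit : ∀ u : V, mul u k = u)
    (hmul_sSup : ∀ (u : V) (S : Set V), mul u (sSup S) = ⨆ v ∈ S, mul u v)
    (hhom : ∀ u v w : V, mul w u ≤ v ↔ w ≤ hom u v)
    (A : ℕ → Type*) (ν : ∀ n, A n → V)
    (s : ∀ {m n : ℕ}, m ≤ n → A m → A n)
    (hs_id : ∀ (n : ℕ) (a : A n), s (le_refl n) a = a)
    (hs_comp : ∀ {m n l : ℕ} (h₁ : m ≤ n) (h₂ : n ≤ l) (a : A m),
      s h₂ (s h₁ a) = s (h₁.trans h₂) a)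
    (hCauchy : k ≤ ⨆ N : ℕ, ⨅ m : ℕ, ⨅ n : ℕ, ⨅ _ : N ≤ m, ⨅ h : m ≤ n,
      ⨅ a : A m, hom (ν m a) (ν n (s h a)))
    {L : Type*} (γ : ∀ n, A n → L)
    (hγ : ∀ {m n : ℕ} (h : m ≤ n) (a : A m), γ m a = γ n (s h a)) :
    -- (C2a)
    (k ≤ ⨆ N : ℕ, ⨅ n : ℕ, ⨅ _ : N ≤ n, ⨅ a : A n,
        hom (ν n a)
          (⨅ M : ℕ, ⨆ m : ℕ, ⨆ _ : M ≤ m, ⨆ a' : {a' : A m // γ m a' = γ n a}, ν m a'.1))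
      -- (C2b)
      ∧ (∀ (B : Type*) (νB : B → V) (φ : L → B),
          (⨆ K : ℕ, ⨅ n : ℕ, ⨅ _ : K ≤ n, ⨅ a : A n, hom (ν n a) (νB (φ (γ n a))))
            ≤ ⨅ a : L,
                hom (⨅ M : ℕ, ⨆ m : ℕ, ⨆ _ : M ≤ m, ⨆ a' : {a' : A m // γ m a' = a}, ν m a'.1)
                  (νB (φ a))) := by
  have h := stmt6_general hmul_comm hhom ν s γ hγ
  exact ⟨hCauchy.trans h.1, h.2⟩
end

section
/- Let V be a commutative quantale and let (X_n, D_n)_{n ∈ ℕ} be a sequence of V-distance sets (sets X_n with arbitrary functions D_n : X_n → X_n → V) with connecting maps s_{m,n} : X_m → X_n for m ≤ n satisfying s_{n,n} = id and s_{n,l} ∘ s_{m,n} = s_{m,l}, which is Cauchy with respect to the Lipschitz norm |f| = ⨅_{x,x'} [D(x,x'), D'(f x, f x')], i.e., k ≤ ⨆_{N ∈ ℕ} ⨅_{N ≤ m ≤ n} |s_{m,n}|. Let γ_n : X_n → X be a colimit cocone of the underlying sequence of sets (γ_m = γ_n ∘ s_{m,n}; every x ∈ X equals γ_n(x') for some n,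 x'; and γ_n x' = γ_m x'' implies s_{n,l} x' = s_{m,l} x'' for some l ≥ n, m). Equip X with D(x,y) = ⨅_{N ∈ ℕ} ⨆_{n ≥ N} ⨆_{x' ∈ γ_n⁻¹(x), y' ∈ γ_n⁻¹(y)} D_n x' y'. Then (C2a) k ≤ ⨆_{N ∈ ℕ} ⨅_{n ≥ N} |γ_n| and (C2b) for every V-distance set (Y, D_Y) and every map φ : X → Y, ⨆_{K ∈ ℕ} ⨅_{n ≥ K} |φ ∘ γ_n| ≤ |φ|. (Hence the V-normed category of V-distance sets and arbitrary maps is Cauchy cocomplete, for every commutative quantale V.) -/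
/-!
The distance on the vertex is the pointwise limit superior of the distances pushed forward along
the cocone maps.

For (C2a), replacing `D n` by its larger pushforward turns `|s m n|` into a lower bound for the norm
of `γ m` against the `n`-th pushforward; for (C2b), `φ` has the same norm on the `n`-th pushforward
as `φ ∘ γ n` has on `D n`. It remains to pass to the limit: the limit inferior of the norms of a
fixed map into or out of `E n` is at most its norm into or out of `limsup E`. Into, because
`w ≤ [u, v]` is a lower bound `w ⊗ u ≤ v` on `v`, inherited by the limit inferior; out of, because
it is equally an upper bound on `u`, the residual of `v` by `w`, inherited by the limit superior.
-/

/-- The distance on the vertex of a cocone `γ` over a sequence of `V`-distance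
sets: `D(x,y) = ⨅_N ⨆_{n ≥ N} ⨆_{x' ∈ γ_n⁻¹(x), y' ∈ γ_n⁻¹(y)} D_n x' y'`. -/
def colimDist {V : Type*} [CompleteLattice V] {X : ℕ → Type*}
    (D : ∀ n, X n → X n → V) {L : Type*} (γ : ∀ n, X n → L) (x y : L) : V :=
  ⨅ N : ℕ, ⨆ n : ℕ, ⨆ _ : N ≤ n,
    ⨆ x' : {x' : X n // γ n x' = x}, ⨆ y' : {y' : X n // γ n y' = y}, D n x'.1 y'.1

open Filter

/-- The Lipschitz norm `|f| = ⨅ x y, [D x y, D' (f x) (f y)]` of a map between sets with `V`-valued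
distances, relative to an internal hom `hom u v = [u, v]`. -/
def lipNorm {V X Y : Type*} [CompleteLattice V] (hom : V → V → V) (D : X → X → V)
    (D' : Y → Y → V) (f : X → Y) : V :=
  ⨅ x, ⨅ y, hom (D x y) (D' (f x) (f y))

/-- The direct image of a `V`-valued distance along a map: the least `E` with
`D x y ≤ E (f x) (f y)`. As a supremum over pairs of fibres it is `⊥` off the range of `f`. -/
def mapDist {V X L : Type*} [CompleteLattice V] (D : X → X → V) (f : X → L) (x y : L) : V :=
  ⨆ x' : {x' : X // f x' = x}, ⨆ y' : {y' : X // f y' = y}, D x'.1 y'.1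

/-- The pointwise limit superior of a family of `V`-valued distances on a fixed set, along a
filter on the index type. -/
def limsupDist {V ι L : Type*} [CompleteLattice V] (l : Filter ι) (E : ι → L → L → V)
    (x y : L) : V :=
  limsup (fun i => E i x y) l

theorem colimDist_eq_limsupDist {V L : Type*} [CompleteLattice V] {X : ℕ → Type*}
    (D : ∀ n, X n → X n → V) (γ : ∀ n, X n → L) :
    colimDist D γ = limsupDist atTop fun n => mapDist (D n) (γ n) := by
  funext x y
  exact limsup_eq_iInf_iSup_of_nat.symm

section LipNorm

variable {V ι X Y L : Type*} [CompleteLattice V] {hom : V → V → V}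

theorem le_lipNorm_iff {D : X → X → V} {D' : Y → Y → V} {f : X → Y} {a : V} :
    a ≤ lipNorm hom D D' f ↔ ∀ x y, a ≤ hom (D x y) (D' (f x) (f y)) := by
  simp only [lipNorm, le_iInf_iff]

theorem le_mapDist (D : X → X → V) (f : X → L) (x y : X) : D x y ≤ mapDist D f (f x) (f y) :=
  le_iSup₂_of_le ⟨x, rfl⟩ ⟨y, rfl⟩ le_rfl

theorem mapDist_le_iff {D : X → X → V} {f : X → L} {E : L → L → V} :
    mapDist D f ≤ E ↔ ∀ x y, D x y ≤ E (f x) (f y) := by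
  refine ⟨fun h x y => (le_mapDist D f x y).trans (h _ _), fun h x y => ?_⟩
  refine iSup₂_le ?_
  rintro ⟨x, rfl⟩ ⟨y, rfl⟩
  exact h x y

theorem lipNorm_le_lipNorm_mapDist (hmono : ∀ u, Monotone (hom u)) (D : X → X → V)
    (E : Y → Y → V) (f : X → Y) (g : Y → L) :
    lipNorm hom D E f ≤ lipNorm hom D (mapDist E g) (g ∘ f) :=
  iInf₂_mono fun x y => hmono (D x y) (le_mapDist E g (f x) (f y))

theorem liminf_lipNorm_le_lipNorm_limsupDist_right {mul : V → V → V}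
    (hhom : ∀ u, GaloisConnection (mul · u) (hom u)) (l : Filter ι) [l.NeBot] (D : X → X → V)
    (E : ι → L → L → V) (f : X → L) :
    liminf (fun i => lipNorm hom D (E i) f) l ≤ lipNorm hom D (limsupDist l E) f := by
  refine liminf_le_of_le (h := fun b hb => le_lipNorm_iff.2 fun x y => ?_)
  have hbE : ∀ᶠ i in l, mul b (D x y) ≤ E i (f x) (f y) :=
    hb.mono fun i hi => (hhom _).le_iff_le.2 (le_lipNorm_iff.1 hi x y)
  exact (hhom _).le_iff_le.1 ((le_liminf_of_le (h := hbE)).trans liminf_le_limsup)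

theorem iInf_lipNorm_le_lipNorm_limsupDist [Preorder ι] [IsDirectedOrder ι] {mul : V → V → V}
    (hhom : ∀ u, GaloisConnection (mul · u) (hom u)) {Z : ι → Type*} (D : ∀ i, Z i → Z i → V)
    (γ : ∀ i, Z i → L) {i : ι} (s : ∀ {j : ι}, i ≤ j → Z i → Z j)
    (hγ : ∀ {j : ι} (h : i ≤ j) (x : Z i), γ i x = γ j (s h x)) :
    ⨅ j, ⨅ h : i ≤ j, lipNorm hom (D i) (D j) (s h)
      ≤ lipNorm hom (D i) (limsupDist atTop fun j => mapDist (D j) (γ j)) (γ i) := by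
  have : Nonempty ι := ⟨i⟩
  have htail : ∀ᶠ j in atTop, ⨅ j, ⨅ h : i ≤ j, lipNorm hom (D i) (D j) (s h)
      ≤ lipNorm hom (D i) (mapDist (D j) (γ j)) (γ i) := by
    filter_upwards [Ici_mem_atTop i] with j hij
    rw [show γ i = γ j ∘ s hij from funext (hγ hij)]
    exact (iInf₂_le j hij).trans
      (lipNorm_le_lipNorm_mapDist (fun u => (hhom u).monotone_u) _ _ _ _)
  exact (le_liminf_of_le (h := htail)).trans
    (liminf_lipNorm_le_lipNorm_limsupDist_right hhom _ _ _ _)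

theorem lipNorm_mapDist {rhom : V → V → V} (hswap : ∀ u v w, w ≤ hom u v ↔ u ≤ rhom w v)
    (D : X → X → V) (f : X → L) (D' : Y → Y → V) (φ : L → Y) :
    lipNorm hom (mapDist D f) D' φ = lipNorm hom D D' (φ ∘ f) := by
  refine eq_of_forall_le_iff fun a => ?_
  simp only [le_lipNorm_iff, hswap]
  exact mapDist_le_iff (E := fun x y => rhom a (D' (φ x) (φ y)))

theorem liminf_lipNorm_le_lipNorm_limsupDist_left {rhom : V → V → V}
    (hswap : ∀ u v w, w ≤ hom u v ↔ u ≤ rhom w v) (l : Filter ι) (E : ι → L → L → V)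
    (D' : Y → Y → V) (φ : L → Y) :
    liminf (fun i => lipNorm hom (E i) D' φ) l ≤ lipNorm hom (limsupDist l E) D' φ := by
  refine liminf_le_of_le (h := fun b hb => le_lipNorm_iff.2 fun x y => (hswap _ _ _).2 ?_)
  exact limsup_le_of_le (h := hb.mono fun i hi => (hswap _ _ _).1 (le_lipNorm_iff.1 hi x y))

end LipNorm

theorem stmt9_general {V ι L : Type*} [CompleteLattice V] [Preorder ι] [IsDirectedOrder ι]
    (mul hom rhom : V → V → V)
    (hhom : ∀ u v w, mul w u ≤ v ↔ w ≤ hom u v) (hrhom : ∀ u v w, mul w u ≤ v ↔ u ≤ rhom w v)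
    (X : ι → Type*) (D : ∀ i, X i → X i → V) (s : ∀ {i j : ι}, i ≤ j → X i → X j)
    (γ : ∀ i, X i → L) (hγ : ∀ {i j : ι} (h : i ≤ j) (x : X i), γ i x = γ j (s h x)) :
    liminf (fun i => ⨅ j, ⨅ h : i ≤ j, lipNorm hom (D i) (D j) (s h)) atTop
        ≤ liminf (fun i => lipNorm hom (D i)
            (limsupDist atTop fun j => mapDist (D j) (γ j)) (γ i)) atTop
      ∧ ∀ (Y : Type*) (DY : Y → Y → V) (φ : L → Y),
          liminf (fun i => lipNorm hom (D i) DY (φ ∘ γ i)) atTop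
            ≤ lipNorm hom (limsupDist atTop fun i => mapDist (D i) (γ i)) DY φ := by
  have hswap : ∀ u v w, w ≤ hom u v ↔ u ≤ rhom w v := fun u v w =>
    (hhom u v w).symm.trans (hrhom u v w)
  refine ⟨liminf_le_liminf (.of_forall fun i => ?_), fun Y DY φ => ?_⟩
  · exact iInf_lipNorm_le_lipNorm_limsupDist (fun u w v => hhom u v w) D γ s hγ
  · simp only [← lipNorm_mapDist hswap]
    exact liminf_lipNorm_le_lipNorm_limsupDist_left hswap _ _ _ _

/-- For any commutative quantale `V`, given a Cauchy sequence of
`V`-distance sets (for the Lipschitz norm), a colimit cocone `γ` of the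
underlying sets, and the canonical distance on the vertex, conditions (C2a) and
(C2b) of a normed colimit hold; hence the `V`-normed category of `V`-distance
sets and arbitrary maps is Cauchy cocomplete. -/
theorem stmt9 {V : Type*} [CompleteLattice V] (mul : V → V → V) (k : V)
    (hom : V → V → V)
    (hmul_comm : ∀ u v : V, mul u v = mul v u)
    (hmul_assoc : ∀ u v w : V, mul (mul u v) w = mul u (mul v w))
    (hmul_unit : ∀ u : V, mul u k = u)
    (hmul_sSup : ∀ (u : V) (S : Set V), mul u (sSup S) = ⨆ v ∈ S, mul u v)
    (hhom : ∀ u v w : V, mul w u ≤ v ↔ w ≤ hom u v)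
    (X : ℕ → Type*) (D : ∀ n, X n → X n → V)
    (s : ∀ {m n : ℕ}, m ≤ n → X m → X n)
    (hs_id : ∀ (n : ℕ) (x : X n), s (le_refl n) x = x)
    (hs_comp : ∀ {m n l : ℕ} (h₁ : m ≤ n) (h₂ : n ≤ l) (x : X m),
      s h₂ (s h₁ x) = s (h₁.trans h₂) x)
    (hCauchy : k ≤ ⨆ N : ℕ, ⨅ m : ℕ, ⨅ n : ℕ, ⨅ _ : N ≤ m, ⨅ h : m ≤ n,
      ⨅ x : X m, ⨅ y : X m, hom (D m x y) (D n (s h x) (s h y)))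
    {L : Type*} (γ : ∀ n, X n → L)
    (hγ : ∀ {m n : ℕ} (h : m ≤ n) (x : X m), γ m x = γ n (s h x))
    (hsurj : ∀ l : L, ∃ (n : ℕ) (x : X n), γ n x = l)
    (hcoeq : ∀ (m n : ℕ) (x : X m) (y : X n), γ m x = γ n y →
      ∃ (l : ℕ) (h₁ : m ≤ l) (h₂ : n ≤ l), s h₁ x = s h₂ y) :
    -- (C2a)
    (k ≤ ⨆ N : ℕ, ⨅ n : ℕ, ⨅ _ : N ≤ n, ⨅ x : X n, ⨅ y : X n,
        hom (D n x y) (colimDist D γ (γ n x) (γ n y)))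
      -- (C2b)
      ∧ (∀ (Y : Type*) (DY : Y → Y → V) (φ : L → Y),
          (⨆ K : ℕ, ⨅ n : ℕ, ⨅ _ : K ≤ n, ⨅ x : X n, ⨅ y : X n,
              hom (D n x y) (DY (φ (γ n x)) (φ (γ n y))))
            ≤ ⨅ x : L, ⨅ y : L, hom (colimDist D γ x y) (DY (φ x) (φ y))) := by
  have h := stmt9_general mul hom hom hhom (fun u v w => hmul_comm w u ▸ hhom w v u) X D s γ hγ
  simp only [liminf_eq_iSup_iInf_of_nat, iInf_comm (ι := _ ≥ _) (ι' := ℕ),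
    ← colimDist_eq_limsupDist] at h
  exact ⟨hCauchy.trans h.1, h.2⟩
end

section
/- Let V be a complete lattice carrying two commutative quantale structures: ⊗ with unit k and ⊙ with unit e (each operation commutative, associative, unital, and preserving arbitrary suprema in each variable), where e is approximated from totally below: e = ⨆{ε ∈ V : ε ⋘ e}, with ε ⋘ e meaning that for every subset S ⊆ V, e ≤ ⨆ S implies ε ≤ s for some s ∈ S. Let (X_n, D_n)_{n ∈ ℕ} be a sequence of V_⊗-categories (k ≤ D_n x x and D_n y z ⊗ D_n x y ≤ D_n x z) with connecting maps s_{m,n} : X_m → X_n for m ≤ n (s_{n,n} = id, s_{n,l} ∘ s_{m,n} = s_{m,l}), Cauchy with respect to the ⊙-Lipschitz norm |f| = ⨅_{x,y} [D(x,y), D'(f x, f y)]_⊙ (internal hom for ⊙), i.e., e ≤ ⨆_{N ∈ ℕ} ⨅_{N ≤ m ≤ n} |s_{m,n}|. Let γ_n : X_n → X be a colimit cocone of the underlying sequence of sets (γ_m = γ_n ∘ s_{m,n}; every x ∈ X equals γ_n(x') for some n, x'; and γ_n x' = γ_m x'' implies s_{n,l} x' = s_{m,l} x'' for some l ≥ n,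 m). Define D(x,y) = ⨅_{N ∈ ℕ} ⨆_{n ≥ N} ⨆_{x' ∈ γ_n⁻¹(x), y' ∈ γ_n⁻¹(y)} D_n x' y'. Then (X, D) is a V_⊗-category: k ≤ D x x for all x, and D x y ⊗ D y z ≤ D x z for all x, y, z. -/
/-- The relation `a ⋘ b`, a strengthening of the way-below relation in which the covering set `S`
is arbitrary and a single member of it dominates `a`. -/
def TotallyBelow {V : Type*} [CompleteLattice V] (a b : V) : Prop :=
  ∀ S : Set V, b ≤ sSup S → ∃ s ∈ S, a ≤ s

/-- The Lipschitz norm `|f|` of a map of `V`-distance sets, for the quantale structure with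
internal hom `hom`. -/
def lipschitzNorm {V : Type*} [CompleteLattice V] (hom : V → V → V) {A B : Type*}
    (d : A → A → V) (d' : B → B → V) (f : A → B) : V :=
  ⨅ x : A, ⨅ y : A, hom (d x y) (d' (f x) (f y))

/-- The infimum of the Lipschitz norms `|s_{m,n}|` over `N ≤ m ≤ n`. The sequence is Cauchy when the
supremum of these over `N` is at least the unit. -/
def tailLipschitzNorm {V : Type*} [CompleteLattice V] (hom : V → V → V) {X : ℕ → Type*}
    (D : ∀ n, X n → X n → V) (s : ∀ {m n : ℕ}, m ≤ n → X m → X n) (N : ℕ) : V :=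
  ⨅ m : ℕ, ⨅ n : ℕ, ⨅ _ : N ≤ m, ⨅ h : m ≤ n, lipschitzNorm hom (D m) (D n) (s h)

section Residuation

variable {V : Type*} [CompleteLattice V]

lemma exists_galoisConnection_of_map_sSup {W : Type*} [CompleteLattice W] {f : V → W}
    (hf : ∀ S : Set V, f (sSup S) = ⨆ v ∈ S, f v) : ∃ g, GaloisConnection f g := by
  have hmono : Monotone f :=
    OrderHomClass.mono (⟨f, fun S => (hf S).trans sSup_image.symm⟩ : sSupHom V W)
  refine ⟨fun w => sSup {v | f v ≤ w}, fun v w => ⟨fun h => le_sSup h, fun h => ?_⟩⟩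
  calc f v ≤ f (sSup {v | f v ≤ w}) := hmono h
    _ = ⨆ v ∈ {v | f v ≤ w}, f v := hf _
    _ ≤ w := iSup₂_le fun _ hv => hv

lemma TotallyBelow.exists_le_of_le_iSup {ι : Type*} {a b : V} {f : ι → V} (hab : TotallyBelow a b)
    (hb : b ≤ ⨆ i, f i) : ∃ i, a ≤ f i := by
  obtain ⟨_, ⟨i, rfl⟩, hi⟩ := hab _ hb
  exact ⟨i, hi⟩

lemma map_le_of_forall_totallyBelow {W : Type*} [Preorder W] {f : V → W} {g : W → V}
    (gc : GaloisConnection f g) {e : V} (happrox : e = sSup {ε | TotallyBelow ε e}) {w : W}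
    (h : ∀ ε, TotallyBelow ε e → f ε ≤ w) : f e ≤ w :=
  gc.l_le <| happrox.trans_le <| sSup_le fun ε hε => gc.le_u (h ε hε)

lemma le_lipschitzNorm_iff {odot homO : V → V → V} (hhomO : ∀ u v w, odot w u ≤ v ↔ w ≤ homO u v)
    {A B : Type*} {d : A → A → V} {d' : B → B → V} {f : A → B} {ε : V} :
    ε ≤ lipschitzNorm homO d d' f ↔ ∀ x y, odot ε (d x y) ≤ d' (f x) (f y) := by
  simp only [lipschitzNorm, le_iInf_iff, hhomO]

end Residuation

section Colimit

variable {V : Type*} [CompleteLattice V] {X : ℕ → Type*} {D : ∀ n, X n → X n → V}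
  {s : ∀ {m n : ℕ}, m ≤ n → X m → X n} {L : Type*} {γ : ∀ n, X n → L}

lemma le_lipschitzNorm_of_le_tailLipschitzNorm {homO : V → V → V} {ε : V} {N m n : ℕ}
    (hε : ε ≤ tailLipschitzNorm homO D s N) (hm : N ≤ m) (h : m ≤ n) :
    ε ≤ lipschitzNorm homO (D m) (D n) (s h) := by
  simp only [tailLipschitzNorm, le_iInf_iff] at hε
  exact hε m n hm h

lemma map_colimDist_le {W : Type*} [Preorder W] {f : V → W} {g : W → V}
    (gc : GaloisConnection f g) {x y : L} {w : W} (N : ℕ)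
    (h : ∀ n, N ≤ n → ∀ x' y' : X n, γ n x' = x → γ n y' = y → f (D n x' y') ≤ w) :
    f (colimDist D γ x y) ≤ w :=
  gc.l_le <| iInf_le_of_le N <| iSup₂_le fun n hn => iSup₂_le fun x' y' =>
    gc.le_u (h n hn x' y' x'.2 y'.2)

lemma le_colimDist {x y : L} {w : V}
    (h : ∀ N, ∃ n ≥ N, ∃ x' y' : X n, γ n x' = x ∧ γ n y' = y ∧ w ≤ D n x' y') :
    w ≤ colimDist D γ x y := by
  refine le_iInf fun N => ?_
  obtain ⟨n, hn, x', y', hx, hy, hw⟩ := h N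
  exact le_iSup₂_of_le n hn <| le_iSup₂_of_le ⟨x', hx⟩ ⟨y', hy⟩ hw

lemma le_colimDist_self {k : V} (hrefl : ∀ n (x : X n), k ≤ D n x x)
    (hγ : ∀ {m n : ℕ} (h : m ≤ n) (x : X m), γ m x = γ n (s h x)) {n : ℕ} (x : X n) :
    k ≤ colimDist D γ (γ n x) (γ n x) := by
  refine le_colimDist fun N => ?_
  have hx : γ (max n N) (s (le_max_left n N) x) = γ n x := (hγ _ _).symm
  exact ⟨max n N, le_max_right n N, _, _, hx, hx, hrefl _ _⟩

lemma exists_ge_map_eq_map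
    (hs_comp : ∀ {m n l : ℕ} (h₁ : m ≤ n) (h₂ : n ≤ l) (x : X m),
      s h₂ (s h₁ x) = s (h₁.trans h₂) x)
    (hcoeq : ∀ (m n : ℕ) (x : X m) (y : X n), γ m x = γ n y →
      ∃ (l : ℕ) (h₁ : m ≤ l) (h₂ : n ≤ l), s h₁ x = s h₂ y)
    {m n : ℕ} {x : X m} {y : X n} (hxy : γ m x = γ n y) (N : ℕ) :
    ∃ l ≥ N, ∃ (h₁ : m ≤ l) (h₂ : n ≤ l), s h₁ x = s h₂ y := by
  obtain ⟨l, h₁, h₂, hl⟩ := hcoeq m n x y hxy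
  refine ⟨max l N, le_max_right l N, h₁.trans (le_max_left l N), h₂.trans (le_max_left l N), ?_⟩
  rw [← hs_comp h₁ (le_max_left l N), ← hs_comp h₂ (le_max_left l N), hl]

variable {tens odot homO : V → V → V}

lemma tens_odot_le_colimDist
    (htens_left : ∀ v, Monotone (tens · v)) (htens_right : ∀ u, Monotone (tens u))
    (hhomO : ∀ u v w, odot w u ≤ v ↔ w ≤ homO u v)
    (htrans : ∀ n (x y z : X n), tens (D n y z) (D n x y) ≤ D n x z)
    (hs_comp : ∀ {m n l : ℕ} (h₁ : m ≤ n) (h₂ : n ≤ l) (x : X m),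
      s h₂ (s h₁ x) = s (h₁.trans h₂) x)
    (hγ : ∀ {m n : ℕ} (h : m ≤ n) (x : X m), γ m x = γ n (s h x))
    (hcoeq : ∀ (m n : ℕ) (x : X m) (y : X n), γ m x = γ n y →
      ∃ (l : ℕ) (h₁ : m ≤ l) (h₂ : n ≤ l), s h₁ x = s h₂ y)
    {ε ε' : V} {N N' : ℕ} (hε : ε ≤ tailLipschitzNorm homO D s N)
    (hε' : ε' ≤ tailLipschitzNorm homO D s N') {m n : ℕ} (hm : N ≤ m) (hn : N' ≤ n)
    {x y : X m} {y' z : X n} (hy : γ m y = γ n y') :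
    tens (odot ε' (D n y' z)) (odot ε (D m x y)) ≤ colimDist D γ (γ m x) (γ n z) := by
  refine le_colimDist fun M => ?_
  obtain ⟨l, hl, hml, hnl, hyy'⟩ := exists_ge_map_eq_map hs_comp hcoeq hy M
  have hxy : odot ε (D m x y) ≤ D l (s hml x) (s hml y) :=
    (le_lipschitzNorm_iff hhomO).1 (le_lipschitzNorm_of_le_tailLipschitzNorm hε hm hml) x y
  have hyz : odot ε' (D n y' z) ≤ D l (s hml y) (s hnl z) := by
    rw [hyy']
    exact (le_lipschitzNorm_iff hhomO).1
      (le_lipschitzNorm_of_le_tailLipschitzNorm hε' hn hnl) y' z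
  refine ⟨l, hl, s hml x, s hnl z, (hγ _ _).symm, (hγ _ _).symm, ?_⟩
  calc tens (odot ε' (D n y' z)) (odot ε (D m x y))
      ≤ tens (D l (s hml y) (s hnl z)) (D l (s hml x) (s hml y)) :=
        (htens_left _ hyz).trans (htens_right _ hxy)
    _ ≤ D l (s hml x) (s hnl z) := htrans l _ _ _

end Colimit

theorem stmt10_general {V : Type*} [CompleteLattice V]
    (tens : V → V → V) (k : V) (odot : V → V → V) (e : V) (homO : V → V → V)
    (htens_sSup_left : ∀ (v : V) (S : Set V), tens (sSup S) v = ⨆ u ∈ S, tens u v)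
    (htens_sSup_right : ∀ (u : V) (S : Set V), tens u (sSup S) = ⨆ v ∈ S, tens u v)
    (hodot_unit : ∀ u : V, odot e u = u)
    (hodot_sSup : ∀ (u : V) (S : Set V), odot u (sSup S) = ⨆ v ∈ S, odot u v)
    (hhomO : ∀ u v w : V, odot w u ≤ v ↔ w ≤ homO u v)
    (happrox : e = sSup {ε : V | TotallyBelow ε e})
    (X : ℕ → Type*) (D : ∀ n, X n → X n → V)
    (hrefl : ∀ (n : ℕ) (x : X n), k ≤ D n x x)
    (htrans : ∀ (n : ℕ) (x y z : X n), tens (D n y z) (D n x y) ≤ D n x z)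
    (s : ∀ {m n : ℕ}, m ≤ n → X m → X n)
    (hs_comp : ∀ {m n l : ℕ} (h₁ : m ≤ n) (h₂ : n ≤ l) (x : X m),
      s h₂ (s h₁ x) = s (h₁.trans h₂) x)
    (hCauchy : e ≤ ⨆ N : ℕ, tailLipschitzNorm homO D s N)
    {L : Type*} (γ : ∀ n, X n → L)
    (hγ : ∀ {m n : ℕ} (h : m ≤ n) (x : X m), γ m x = γ n (s h x))
    (hsurj : ∀ l : L, ∃ (n : ℕ) (x : X n), γ n x = l)
    (hcoeq : ∀ (m n : ℕ) (x : X m) (y : X n), γ m x = γ n y →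
      ∃ (l : ℕ) (h₁ : m ≤ l) (h₂ : n ≤ l), s h₁ x = s h₂ y) :
    (∀ x : L, k ≤ colimDist D γ x x)
      ∧ (∀ x y z : L,
          tens (colimDist D γ y z) (colimDist D γ x y) ≤ colimDist D γ x z) := by
  refine ⟨fun x => ?_, fun x y z => ?_⟩
  · obtain ⟨n, x', rfl⟩ := hsurj x
    exact le_colimDist_self hrefl hγ x'
  choose lres gcl using fun v =>
    exists_galoisConnection_of_map_sSup (f := (tens · v)) (htens_sSup_left v)
  choose rres gcr using fun u => exists_galoisConnection_of_map_sSup (htens_sSup_right u)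
  choose ores gco using fun u => exists_galoisConnection_of_map_sSup (hodot_sSup u)
  have gchom (u : V) : GaloisConnection (odot · u) (homO u) := fun w v => hhomO u v w
  suffices h : ∀ ε, TotallyBelow ε e → ∀ ε', TotallyBelow ε' e →
      tens (odot ε' (colimDist D γ y z)) (odot ε (colimDist D γ x y)) ≤ colimDist D γ x z by
    rw [← hodot_unit (colimDist D γ y z), ← hodot_unit (colimDist D γ x y)]
    refine map_le_of_forall_totallyBelow ((gchom _).compose (gcr _)) happrox fun ε hε => ?_
    exact map_le_of_forall_totallyBelow ((gchom _).compose (gcl _)) happrox (h ε hε)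
  intro ε hε ε' hε'
  obtain ⟨N, hN⟩ := hε.exists_le_of_le_iSup hCauchy
  obtain ⟨N', hN'⟩ := hε'.exists_le_of_le_iSup hCauchy
  refine map_colimDist_le ((gco ε).compose (gcr _)) N ?_
  rintro m hm x' y' rfl rfl
  refine map_colimDist_le ((gco ε').compose (gcl _)) N' ?_
  rintro n hn y'' z'' hy rfl
  exact tens_odot_le_colimDist (fun v => (gcl v).monotone_l) (fun u => (gcr u).monotone_l)
    hhomO htrans hs_comp hγ hcoeq hN hN' hm hn hy.symm

/-- Two quantale structures `⊗` (unit `k`) and `⊙` (unit `e`) on a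
complete lattice `V`, with `e` approximated from totally below.  Given a
sequence of `V_⊗`-categories that is Cauchy for the `⊙`-Lipschitz norm, a
colimit cocone `γ` of the underlying sets, and the canonical distance `D` on
the vertex, `(X, D)` is again a `V_⊗`-category. -/
theorem stmt10 {V : Type*} [CompleteLattice V]
    (tens : V → V → V) (k : V) (odot : V → V → V) (e : V) (homO : V → V → V)
    (htens_comm : ∀ u v : V, tens u v = tens v u)
    (htens_assoc : ∀ u v w : V, tens (tens u v) w = tens u (tens v w))
    (htens_unit : ∀ u : V, tens u k = u)
    (htens_sSup : ∀ (u : V) (S : Set V), tens u (sSup S) = ⨆ v ∈ S, tens u v)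
    (hodot_comm : ∀ u v : V, odot u v = odot v u)
    (hodot_assoc : ∀ u v w : V, odot (odot u v) w = odot u (odot v w))
    (hodot_unit : ∀ u : V, odot u e = u)
    (hodot_sSup : ∀ (u : V) (S : Set V), odot u (sSup S) = ⨆ v ∈ S, odot u v)
    (hhomO : ∀ u v w : V, odot w u ≤ v ↔ w ≤ homO u v)
    (happrox : e = sSup {ε : V | ∀ S : Set V, e ≤ sSup S → ∃ s ∈ S, ε ≤ s})
    (X : ℕ → Type*) (D : ∀ n, X n → X n → V)
    (hrefl : ∀ (n : ℕ) (x : X n), k ≤ D n x x)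
    (htrans : ∀ (n : ℕ) (x y z : X n), tens (D n y z) (D n x y) ≤ D n x z)
    (s : ∀ {m n : ℕ}, m ≤ n → X m → X n)
    (hs_id : ∀ (n : ℕ) (x : X n), s (le_refl n) x = x)
    (hs_comp : ∀ {m n l : ℕ} (h₁ : m ≤ n) (h₂ : n ≤ l) (x : X m),
      s h₂ (s h₁ x) = s (h₁.trans h₂) x)
    (hCauchy : e ≤ ⨆ N : ℕ, ⨅ m : ℕ, ⨅ n : ℕ, ⨅ _ : N ≤ m, ⨅ h : m ≤ n,
      ⨅ x : X m, ⨅ y : X m, homO (D m x y) (D n (s h x) (s h y)))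
    {L : Type*} (γ : ∀ n, X n → L)
    (hγ : ∀ {m n : ℕ} (h : m ≤ n) (x : X m), γ m x = γ n (s h x))
    (hsurj : ∀ l : L, ∃ (n : ℕ) (x : X n), γ n x = l)
    (hcoeq : ∀ (m n : ℕ) (x : X m) (y : X n), γ m x = γ n y →
      ∃ (l : ℕ) (h₁ : m ≤ l) (h₂ : n ≤ l), s h₁ x = s h₂ y) :
    (∀ x : L, k ≤ colimDist D γ x x)
      ∧ (∀ x y z : L,
          tens (colimDist D γ x y) (colimDist D γ y z) ≤ colimDist D γ x z) := by
  simpa only [htens_comm] using stmt10_general tens k odot e homO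
    (fun v S => by simpa only [htens_comm] using htens_sSup v S) htens_sSup
    (fun u => (hodot_comm e u).trans (hodot_unit u)) hodot_sSup hhomO happrox X D hrefl htrans s
    hs_comp hCauchy γ hγ hsurj hcoeq
end
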